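/- arXiv:math-ph/0610053 — 2 statements merged into one kernel-verified Lean document; each statement's English description precedes it below -/
import Mathlib

section
/- (Gerstenhaber identity) In the endomorphism operad of a K-module L, the associator (h, f, g) := (h • f) • g − h • (f • g) of the total composition is graded symmetric in its last two arguments: for all homogeneous h, f, g one has (h, f, g) = (−1)^{|f||g|} (h, g, f). -/
/-!
Expand `(h • f) • g` as the double sum of the terms `(h ∘ᵢ f) ∘ⱼ g`. For fixed `i` the range of `j`
splits into three blocks. In the middle block `j = i + l` with `l < m`, the map `g` is inserted
into `f`; there `(h ∘ᵢ f) ∘ᵢ₊ₗ g = h ∘ᵢ (f ∘ₗ g)` (`pcomp_nested`), so these terms add up to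
`h • (f • g)` by additivity of `h` in its `i`-th argument. Hence the associator is the sum of the
two outer blocks (`associator_eq`), where `f` and `g` are inserted into distinct arguments of `h`:
`g` to the left of `f` in the first one, to the right of `f` in the second one. The operad axiom
`(h ∘ᵢ f) ∘ⱼ g = (-1)^{|f||g|} (h ∘ⱼ g) ∘ᵢ₊ₙ₋₁ f` for `j < i` (`pcomp_parallel`) matches the first
block for `(f, g)` with the second one for `(g, f)` and vice versa.
-/

variable {K : Type*} [CommRing K] {L : Type*} [AddCommGroup L] [Module K L]

/-- `(-1)^z` for an integer exponent `z`. -/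
def sgn (z : ℤ) : ℤ := (-1) ^ z.natAbs

/-- The underlying function (on `ℕ`-indexed families of elements of `L`) of an
`n`-multilinear map `f ∈ Eⁿ`; equality of such functions is equivalent to equality
of the multilinear maps. -/
def toFn {n : ℕ} (f : MultilinearMap K (fun _ : Fin n => L) L) : (ℕ → L) → L :=
  fun x => f fun a => x a.val

/-- Partial composition `F ∘ᵢ G`, where `n` is the arity (degree) of `G`:
`(f ∘ᵢ g)(x_0, …) = (-1)^{i(n-1)} f(x_0, …, x_{i-1}, g(x_i, …, x_{i+n-1}), x_{i+n}, …)`. -/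
def pcomp (i n : ℕ) (F G : (ℕ → L) → L) : (ℕ → L) → L :=
  fun x => sgn ((i : ℤ) * ((n : ℤ) - 1)) •
    F fun k => if k < i then x k else if k = i then G (fun j => x (i + j)) else x (k + n - 1)

/-- Total composition `F • G := Σ_{i=0}^{m-1} F ∘ᵢ G`, where `m, n` are the arities of `F, G`. -/
def tcomp (m n : ℕ) (F G : (ℕ → L) → L) : (ℕ → L) → L :=
  ∑ i ∈ Finset.range m, pcomp i n F G

lemma sgn_eq_negOnePow (z : ℤ) : sgn z = (z.negOnePow : ℤ) := by
  rcases Int.even_or_odd z with hz | hz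
  · rw [sgn, Int.negOnePow_even z hz, (Int.natAbs_even.mpr hz).neg_one_pow]; rfl
  · rw [sgn, Int.negOnePow_odd z hz, (Int.natAbs_odd.mpr hz).neg_one_pow]; rfl

lemma sgn_mul_sgn (a b : ℤ) : sgn a * sgn b = sgn (a + b) := by
  simp [sgn_eq_negOnePow, Int.negOnePow_add]

lemma sgn_congr {a b : ℤ} (hab : Even (a - b)) : sgn a = sgn b := by
  rw [sgn_eq_negOnePow, sgn_eq_negOnePow, (Int.negOnePow_eq_iff a b).mpr hab]

lemma sgn_mul_self (a : ℤ) : sgn a * sgn a = 1 := by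
  rw [sgn_mul_sgn, sgn_congr (b := 0) (by simp)]; rfl

/-- `toFn f` only depends on the first `n` entries of the family. -/
lemma toFn_congr {n : ℕ} (f : MultilinearMap K (fun _ : Fin n => L) L) {x y : ℕ → L}
    (hxy : ∀ a < n, x a = y a) : toFn f x = toFn f y := by
  unfold toFn
  congr 1
  funext a
  exact hxy a a.isLt

/-- The value of `h` as a linear function of its `i`-th argument, the other ones being fixed. -/
lemma exists_linear_slot {p : ℕ} (h : MultilinearMap K (fun _ : Fin p => L) L) {i : ℕ}
    (hi : i < p) (a b : ℕ → L) : ∃ φ : L →ₗ[K] L, ∀ c,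
      toFn h (fun k => if k < i then a k else if k = i then c else b k) = φ c := by
  refine ⟨h.toLinearMap (fun k => if k.val < i then a k else b k) ⟨i, hi⟩, fun c => ?_⟩
  rw [MultilinearMap.toLinearMap_apply, toFn]
  congr 1
  funext k
  by_cases hk : k = ⟨i, hi⟩
  · subst hk; simp
  · have : k.val ≠ i := fun e => hk (Fin.ext e)
    simp [Function.update_of_ne hk, this]

lemma pcomp_sum_right {p : ℕ} (h : MultilinearMap K (fun _ : Fin p => L) L) {i : ℕ}
    (hi : i < p) (N : ℕ) {ι : Type*} (s : Finset ι) (G : ι → (ℕ → L) → L) :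
    pcomp i N (toFn h) (∑ l ∈ s, G l) = ∑ l ∈ s, pcomp i N (toFn h) (G l) := by
  funext x
  obtain ⟨φ, hφ⟩ := exists_linear_slot h hi x (fun k => x (k + N - 1))
  simp only [Finset.sum_apply, pcomp, hφ, map_sum, Finset.smul_sum]

lemma pcomp_sum_left (j N : ℕ) {ι : Type*} (s : Finset ι) (F : ι → (ℕ → L) → L)
    (G : (ℕ → L) → L) :
    pcomp j N (∑ l ∈ s, F l) G = ∑ l ∈ s, pcomp j N (F l) G := by
  funext x
  simp only [Finset.sum_apply, pcomp, Finset.smul_sum]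

/-- Sequential axiom: `(h ∘ᵢ f) ∘ᵢ₊ₗ g = h ∘ᵢ (f ∘ₗ g)`. -/
lemma pcomp_nested {p : ℕ} (h : MultilinearMap K (fun _ : Fin p => L) L) {i : ℕ} (hi : i < p)
    {m l : ℕ} (hl : l < m) (n : ℕ) (F G : (ℕ → L) → L) :
    pcomp (i + l) n (pcomp i m (toFn h) F) G =
      pcomp i (m + n - 1) (toFn h) (pcomp l n F G) := by
  funext x
  obtain ⟨φ, hφ⟩ := exists_linear_slot h hi x (fun k => x (k + (m + n - 1) - 1))
  simp only [pcomp, hφ, map_zsmul, smul_smul, sgn_mul_sgn]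
  rw [← hφ]
  congr 1
  · apply sgn_congr
    rw [show ((m + n - 1 : ℕ) : ℤ) = m + n - 1 by omega]
    push_cast
    ring_nf
    simp
  · congr 1
    funext k
    rcases lt_trichotomy k i with hk | rfl | hk
    · simp [hk, show k < i + l by omega]
    · simp only [lt_irrefl, if_false, if_true]
      congr 1
      funext a
      simp only [add_lt_add_iff_left, add_right_inj, add_assoc]
      split_ifs with h1 h2
      · rfl
      · rfl
      · congr 1; omega
    · rw [if_neg (by omega), if_neg (by omega), if_neg (by omega), if_neg (by omega),
        if_neg (by omega), if_neg (by omega)]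
      congr 1; omega

/-- Parallel axiom: for `j < i`, `(H ∘ᵢ f) ∘ⱼ g = (-1)^{|f||g|} (H ∘ⱼ g) ∘ᵢ₊ₙ₋₁ f`. -/
lemma pcomp_parallel {n : ℕ} (H F : (ℕ → L) → L) (g : MultilinearMap K (fun _ : Fin n => L) L)
    {i j : ℕ} (hji : j < i) (m : ℕ) :
    pcomp j n (pcomp i m H F) (toFn g) = sgn (((m : ℤ) - 1) * ((n : ℤ) - 1)) •
      pcomp (i + n - 1) m (pcomp j n H (toFn g)) F := by
  funext x
  simp only [pcomp, Pi.smul_apply, smul_smul, sgn_mul_sgn]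
  congr 1
  · apply sgn_congr
    rw [show ((i + n - 1 : ℕ) : ℤ) = i + n - 1 by omega]
    refine ⟨-(((m : ℤ) - 1) * ((n : ℤ) - 1)), ?_⟩
    ring
  · congr 1
    funext k
    rcases lt_trichotomy k j with hk | rfl | hk
    · rw [if_pos (by omega), if_pos (by omega), if_pos (by omega), if_pos (by omega)]
    · rw [if_pos (by omega), if_neg (by omega), if_pos rfl, if_neg (by omega), if_pos rfl]
      apply toFn_congr
      intro a ha
      rw [if_pos (by omega)]
    · simp only [show ¬ k < j by omega, show ¬ k = j by omega, if_false]
      rcases lt_trichotomy k i with hki | rfl | hki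
      · rw [if_pos (by omega), if_pos (by omega)]
      · rw [if_neg (by omega), if_pos rfl, if_neg (by omega), if_pos (by omega)]
        congr 1
        funext a
        rw [if_neg (by omega), if_neg (by omega)]
        congr 1; omega
      · rw [if_neg (by omega), if_neg (by omega), if_neg (by omega), if_neg (by omega),
          if_neg (by omega), if_neg (by omega)]
        congr 1; omega

/-- The associator is the sum of those terms of `(h • f) • g` in which `f` and `g` are inserted
into distinct arguments of `h`. -/
lemma associator_eq {p : ℕ} (h : MultilinearMap K (fun _ : Fin p => L) L) (m n : ℕ)
    (F G : (ℕ → L) → L) :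
    tcomp (p + m - 1) n (tcomp p m (toFn h) F) G - tcomp p (m + n - 1) (toFn h) (tcomp m n F G) =
      ∑ i ∈ Finset.range p, ∑ j ∈ Finset.range i, pcomp j n (pcomp i m (toFn h) F) G +
      ∑ i ∈ Finset.range p, ∑ k ∈ Finset.Ico (i + 1) p,
        pcomp (k + m - 1) n (pcomp i m (toFn h) F) G := by
  rw [sub_eq_iff_eq_add]
  simp only [tcomp, pcomp_sum_left]
  rw [Finset.sum_comm, ← Finset.sum_add_distrib, ← Finset.sum_add_distrib]
  refine Finset.sum_congr rfl fun i hi => ?_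
  rw [Finset.mem_range] at hi
  rw [pcomp_sum_right h hi, show p + m - 1 = i + (m + (p - (i + 1))) by omega,
    Finset.sum_range_add, Finset.sum_range_add, Finset.sum_Ico_eq_sum_range, add_assoc]
  congr 1
  rw [add_comm]
  congr 1
  · refine Finset.sum_congr rfl fun a _ => ?_
    congr 1; omega
  · exact Finset.sum_congr rfl fun l hl => pcomp_nested h hi (Finset.mem_range.mp hl) n F G

/-- Gerstenhaber identity: in the endomorphism operad, the associator
`(h, f, g) := (h • f) • g - h • (f • g)` of the total composition is graded symmetric
in its last two arguments: `(h, f, g) = (-1)^{|f||g|} (h, g, f)`. -/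
theorem endop_gerstenhaber_identity {p m n : ℕ} (h : MultilinearMap K (fun _ : Fin p => L) L) (f : MultilinearMap K (fun _ : Fin m => L) L) (g : MultilinearMap K (fun _ : Fin n => L) L) :
    tcomp (p + m - 1) n (tcomp p m (toFn h) (toFn f)) (toFn g) -
        tcomp p (m + n - 1) (toFn h) (tcomp m n (toFn f) (toFn g)) =
      sgn (((m : ℤ) - 1) * ((n : ℤ) - 1)) •
        (tcomp (p + n - 1) m (tcomp p n (toFn h) (toFn g)) (toFn f) -
          tcomp p (n + m - 1) (toFn h) (tcomp n m (toFn g) (toFn f))) := by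
  have triangle : ∀ T : ℕ → ℕ → (ℕ → L) → L,
      ∑ i ∈ Finset.range p, ∑ j ∈ Finset.range i, T i j =
        ∑ j ∈ Finset.range p, ∑ i ∈ Finset.Ico (j + 1) p, T i j := fun T =>
    Finset.sum_comm' fun i j => by simp only [Finset.mem_range, Finset.mem_Ico]; omega
  rw [associator_eq, associator_eq, smul_add, add_comm (sgn _ • _)]
  congr 1
  · rw [triangle]
    simp only [Finset.smul_sum]
    refine Finset.sum_congr rfl fun j _ => Finset.sum_congr rfl fun i hi => ?_
    exact pcomp_parallel _ _ g (by rw [Finset.mem_Ico] at hi; omega) m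
  · rw [triangle]
    simp only [Finset.smul_sum]
    refine Finset.sum_congr rfl fun i _ => Finset.sum_congr rfl fun k hk => ?_
    rw [pcomp_parallel _ _ f (show i < k by rw [Finset.mem_Ico] at hk; omega) n, smul_smul,
      mul_comm ((n : ℤ) - 1), sgn_mul_self, one_smul]
end

section
/- In the endomorphism operad of a K-module L, the right adjoint operators ∂_f(h) := [h, f] satisfy the graded commutation relation [∂_f, ∂_g] := ∂_f ∂_g − (−1)^{|f||g|} ∂_g ∂_f = ∂_{[g,f]}, i.e., for all homogeneous f, g, h one has [[h, g], f] − (−1)^{|f||g|} [[h, f], g] = [h, [g, f]]. -/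
/-!
The total composition is a graded right pre-Lie product, and the graded Jacobi identity for its
commutator is a formal consequence.

For `H, G, F` of arities `p, n, m`, split `(H • G) • F = ∑ᵢ ∑ⱼ (H ∘ᵢ G) ∘ⱼ F` according to whether
`F` is inserted to the left of `G`, into `G`, or to the right of `G`. Insertions into `G` add up to
`H • (G • F)` (`pcomp_pcomp_nested`). Insertions to the right form a sum
`parSum p n m H G F`, and those to the left are, by the parallel axiom (`pcomp_pcomp_parallel`),
`(-1)^{|f||g|}` times the same sum with `F` and `G` exchanged. Hence the associator
`(H • G) • F - H • (G • F) = parSum p n m H G F + (-1)^{|f||g|} parSum p m n H F G` (`tcomp_tcomp`)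
is graded symmetric in `G` and `F`.

Arities are natural numbers, so `p + n - 1` truncates when `p = n = 0`; in that case the composition
itself vanishes, so neither signs nor summation ranges matter.
-/

variable {K : Type*} [CommRing K] {L : Type*} [AddCommGroup L] [Module K L]

/-- Gerstenhaber bracket `[F, G] := F • G - (-1)^{|F||G|} G • F` for arities `m, n` of `F, G`. -/
def gbr (m n : ℕ) (F G : (ℕ → L) → L) : (ℕ → L) → L :=
  tcomp m n F G - sgn (((m : ℤ) - 1) * ((n : ℤ) - 1)) • tcomp n m G F

lemma sgn_add (a b : ℤ) : sgn (a + b) = sgn a * sgn b := by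
  simp [sgn_eq_negOnePow, Int.negOnePow_add]

/-! ### Multilinear functions of families indexed by the natural numbers -/

/-- `F` depends only on its first `m` arguments and is additive in each of them. These are the only
properties of `toFn f`, for an `m`-multilinear `f`, that the argument uses. -/
structure IsMultiadditive (m : ℕ) (F : (ℕ → L) → L) : Prop where
  congr : ∀ x y : ℕ → L, (∀ k < m, x k = y k) → F x = F y
  update_add : ∀ i < m, ∀ (x : ℕ → L) (a b : L),
    F (Function.update x i (a + b)) = F (Function.update x i a) + F (Function.update x i b)

lemma isMultiadditive_toFn {m : ℕ} (f : MultilinearMap K (fun _ : Fin m => L) L) :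
    IsMultiadditive m (toFn f) where
  congr x y hxy := by
    unfold toFn
    congr 1
    funext a
    exact hxy _ a.2
  update_add i hi x a b := by
    have key (c : L) : (fun k : Fin m => Function.update x i c k.val)
        = Function.update (fun k : Fin m => x k.val) ⟨i, hi⟩ c := by
      funext k
      by_cases hk : k = ⟨i, hi⟩
      · subst hk; simp
      · have : k.val ≠ i := fun e => hk (Fin.ext e)
        simp [hk, this]
    simp only [toFn, key]
    exact f.map_update_add _ _ _ _

/-! ### Linearity of the compositions -/

lemma pcomp_add_right {p : ℕ} {H : (ℕ → L) → L} (hH : IsMultiadditive p H) {i : ℕ} (hi : i < p)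
    (n : ℕ) (A B : (ℕ → L) → L) : pcomp i n H (A + B) = pcomp i n H A + pcomp i n H B := by
  have key (C : (ℕ → L) → L) (x : ℕ → L) :
      (fun k => if k < i then x k else if k = i then C (fun j => x (i + j)) else x (k + n - 1))
      = Function.update (fun k => if k < i then x k else x (k + n - 1)) i
          (C fun j => x (i + j)) := by
    funext k
    by_cases hk : k = i
    · subst hk; simp
    · simp [hk]
  funext x
  rw [Pi.add_apply]
  simp only [pcomp, key]
  rw [Pi.add_apply, hH.update_add i hi, smul_add]

/-- `A ↦ H ∘ᵢ A` as an additive map. -/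
def pcompHom {p : ℕ} {H : (ℕ → L) → L} (hH : IsMultiadditive p H) {i : ℕ} (hi : i < p) (n : ℕ) :
    ((ℕ → L) → L) →+ ((ℕ → L) → L) :=
  AddMonoidHom.mk' (pcomp i n H) (pcomp_add_right hH hi n)

/-- `A ↦ H • A` as an additive map. -/
def tcompHom {p : ℕ} {H : (ℕ → L) → L} (hH : IsMultiadditive p H) (n : ℕ) :
    ((ℕ → L) → L) →+ ((ℕ → L) → L) :=
  AddMonoidHom.mk' (tcomp p n H) fun A B => by
    simp only [tcomp, ← Finset.sum_add_distrib]
    exact Finset.sum_congr rfl fun i hi => pcomp_add_right hH (Finset.mem_range.1 hi) n A B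

lemma tcomp_sub_smul_right {p : ℕ} {H : (ℕ → L) → L} (hH : IsMultiadditive p H) (n : ℕ) (c : ℤ)
    (A B : (ℕ → L) → L) : tcomp p n H (A - c • B) = tcomp p n H A - c • tcomp p n H B := by
  change tcompHom hH n _ = tcompHom hH n _ - c • tcompHom hH n _
  rw [map_sub, map_zsmul]

lemma tcomp_zero_right {p : ℕ} {H : (ℕ → L) → L} (hH : IsMultiadditive p H) (n : ℕ) :
    tcomp p n H 0 = 0 :=
  map_zero (tcompHom hH n)

/-- `A ↦ A ∘ᵢ F` as an additive map. -/
def pcompLeftHom (i m : ℕ) (F : (ℕ → L) → L) : ((ℕ → L) → L) →+ ((ℕ → L) → L) :=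
  AddMonoidHom.mk' (fun A => pcomp i m A F) fun A B => by
    funext x
    simp only [pcomp, Pi.add_apply, smul_add]

lemma pcomp_sum_left_s13 (i m : ℕ) (F : (ℕ → L) → L) (s : Finset ℕ) (A : ℕ → (ℕ → L) → L) :
    pcomp i m (∑ k ∈ s, A k) F = ∑ k ∈ s, pcomp i m (A k) F :=
  map_sum (pcompLeftHom i m F) A s

lemma tcomp_sub_smul_left (q m : ℕ) (F : (ℕ → L) → L) (c : ℤ) (A B : (ℕ → L) → L) :
    tcomp q m (A - c • B) F = tcomp q m A F - c • tcomp q m B F := by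
  have key (i : ℕ) : pcomp i m (A - c • B) F = pcomp i m A F - c • pcomp i m B F := by
    change pcompLeftHom i m F _ = pcompLeftHom i m F _ - c • pcompLeftHom i m F _
    rw [map_sub, map_zsmul]
  simp only [tcomp, key, Finset.sum_sub_distrib, Finset.smul_sum]

lemma tcomp_zero_left (q m : ℕ) (F : (ℕ → L) → L) : tcomp q m 0 F = 0 :=
  Finset.sum_eq_zero fun i _ => map_zero (pcompLeftHom i m F)

lemma tcomp_zero_arity (n : ℕ) (H G : (ℕ → L) → L) : tcomp 0 n H G = 0 := by
  simp [tcomp]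

/-! ### The operad axioms for partial composition -/

/-- Sequential composition axiom: inserting `F` into the `j`-th slot of the inserted `G`. -/
lemma pcomp_pcomp_nested {p : ℕ} {H : (ℕ → L) → L} (hH : IsMultiadditive p H) {i j n : ℕ}
    (hi : i < p) (hj : j < n) (m : ℕ) (G F : (ℕ → L) → L) :
    pcomp (i + j) m (pcomp i n H G) F = pcomp i (n + m - 1) H (pcomp j m G F) := by
  -- the unsigned composite `G ∘ⱼ F`, so that its sign can be moved out of the slot of `H`
  set R : (ℕ → L) → L := fun x => G fun k =>
    if k < j then x k else if k = j then F (fun l => x (j + l)) else x (k + m - 1) with hR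
  have hGF : pcomp j m G F = sgn ((j : ℤ) * ((m : ℤ) - 1)) • R := rfl
  have hout : pcomp i (n + m - 1) H (sgn ((j : ℤ) * ((m : ℤ) - 1)) • R)
      = sgn ((j : ℤ) * ((m : ℤ) - 1)) • pcomp i (n + m - 1) H R :=
    map_zsmul (pcompHom hH hi (n + m - 1)) _ _
  rw [hGF, hout]
  funext x
  simp only [pcomp, Pi.smul_apply, smul_smul, ← sgn_add]
  congr 1
  · congr 1
    have : ((n + m - 1 : ℕ) : ℤ) = n + m - 1 := by omega
    rw [this]; push_cast; ring
  · congr 1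
    funext k
    rcases lt_trichotomy k i with hk | hk | hk
    · simp [hk, show k < i + j by omega]
    · subst hk
      simp only [lt_irrefl, if_false, if_true, hR]
      congr 1
      funext l
      rcases lt_trichotomy l j with hl | hl | hl
      · simp [hl]
      · subst hl; simp [add_assoc]
      · simp only [show ¬ k + l < k + j by omega, show ¬ k + l = k + j by omega,
          show ¬ l < j by omega, show ¬ l = j by omega, if_false]
        congr 1; omega
    · simp only [show ¬ k < i by omega, show ¬ k = i by omega,
        show ¬ k + n - 1 < i + j by omega, show ¬ k + n - 1 = i + j by omega, if_false]
      congr 1; omega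

/-- Parallel composition axiom: insertions into slots `j < i` of `H` commute up to the sign
`(-1)^{|f||g|}`. Inserting `F` at `j` first shifts the slot `i` to `i + m - 1`. -/
lemma pcomp_pcomp_parallel {i j n m : ℕ} (hij : j < i) (H G : (ℕ → L) → L) {F : (ℕ → L) → L}
    (hF : IsMultiadditive m F) :
    pcomp j m (pcomp i n H G) F
      = sgn (((m : ℤ) - 1) * ((n : ℤ) - 1)) • pcomp (i + m - 1) n (pcomp j m H F) G := by
  funext x
  simp only [pcomp, Pi.smul_apply, smul_smul]
  congr 1
  · have : ((i + m - 1 : ℕ) : ℤ) = i + (m - 1) := by omega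
    rw [this, add_mul, sgn_add]
    linear_combination (-sgn ((j : ℤ) * ((m : ℤ) - 1)) * sgn ((i : ℤ) * ((n : ℤ) - 1)))
      * sgn_mul_self (((m : ℤ) - 1) * ((n : ℤ) - 1))
  · congr 1
    funext k
    rcases lt_trichotomy k j with hk | hk | hk
    · simp [hk, show k < i by omega, show k < i + m - 1 by omega]
    · subst hk
      simp only [hij, lt_irrefl, if_false, if_true]
      apply hF.congr
      intro l hl
      simp [show k + l < i + m - 1 by omega]
    · simp only [show ¬ k < j by omega, show ¬ k = j by omega, if_false]
      rcases lt_trichotomy k i with hki | hki | hki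
      · simp [hki, show k + m - 1 < i + m - 1 by omega]
      · subst hki
        simp only [lt_irrefl, if_false, if_true]
        congr 1
        funext l
        simp only [show ¬ k + l < j by omega, show ¬ k + l = j by omega, if_false]
        congr 1; omega
      · simp only [show ¬ k < i by omega, show ¬ k = i by omega,
          show ¬ k + n - 1 < j by omega, show ¬ k + n - 1 = j by omega,
          show ¬ k + m - 1 < i + m - 1 by omega, show ¬ k + m - 1 = i + m - 1 by omega, if_false]
        congr 1; omega

/-! ### The pre-Lie identity -/

/-- The sum over `i < k < p` of the composites of `H` with `G` inserted in slot `i` and `F` in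
slot `k`. The index is written `k = i + 1 + d`, so the slot for `F` after inserting `G` is
`k + n - 1 = i + n + d`. -/
def parSum (p n m : ℕ) (H G F : (ℕ → L) → L) : (ℕ → L) → L :=
  ∑ i ∈ Finset.range p, ∑ d ∈ Finset.range (p - 1 - i), pcomp (i + n + d) m (pcomp i n H G) F

/-- Reindexing of the pairs `j < i < p` by `(j, i - j - 1)`. -/
lemma sum_range_triangle {M : Type*} [AddCommMonoid M] (p : ℕ) (T : ℕ → ℕ → M) :
    ∑ i ∈ Finset.range p, ∑ j ∈ Finset.range i, T j i
      = ∑ j ∈ Finset.range p, ∑ d ∈ Finset.range (p - 1 - j), T j (j + 1 + d) := by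
  rw [Finset.sum_sigma', Finset.sum_sigma']
  refine Finset.sum_bij' (fun a _ => ⟨a.2, a.1 - a.2 - 1⟩) (fun a _ => ⟨a.1 + 1 + a.2, a.1⟩)
    ?_ ?_ ?_ ?_ ?_
  · rintro ⟨i, j⟩ h; simp only [Finset.mem_sigma, Finset.mem_range] at h ⊢; omega
  · rintro ⟨i, j⟩ h; simp only [Finset.mem_sigma, Finset.mem_range] at h ⊢; omega
  · rintro ⟨i, j⟩ h
    simp only [Finset.mem_sigma, Finset.mem_range] at h
    simp only [Sigma.mk.injEq, heq_eq_eq, and_true]; omega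
  · rintro ⟨i, j⟩ h
    simp only [Sigma.mk.injEq, heq_eq_eq, true_and]; omega
  · rintro ⟨i, j⟩ h
    simp only [Finset.mem_sigma, Finset.mem_range] at h
    simp only
    congr 1; omega

/-- The associator of the total composition, in a form that is visibly graded symmetric. -/
lemma tcomp_tcomp {p n m : ℕ} {H G F : (ℕ → L) → L} (hH : IsMultiadditive p H)
    (hF : IsMultiadditive m F) :
    tcomp (p + n - 1) m (tcomp p n H G) F = tcomp p (n + m - 1) H (tcomp n m G F)
      + parSum p n m H G F + sgn (((m : ℤ) - 1) * ((n : ℤ) - 1)) • parSum p m n H F G := by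
  have split (i : ℕ) (hi : i < p) :
      ∑ j ∈ Finset.range (p + n - 1), pcomp j m (pcomp i n H G) F
        = pcomp i (n + m - 1) H (tcomp n m G F)
          + ∑ d ∈ Finset.range (p - 1 - i), pcomp (i + n + d) m (pcomp i n H G) F
          + ∑ j ∈ Finset.range i, sgn (((m : ℤ) - 1) * ((n : ℤ) - 1)) •
              pcomp (i + m - 1) n (pcomp j m H F) G := by
    have e : p + n - 1 = i + n + (p - 1 - i) := by omega
    rw [e, Finset.sum_range_add, Finset.sum_range_add]
    have h1 : ∑ j ∈ Finset.range i, pcomp j m (pcomp i n H G) F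
        = ∑ j ∈ Finset.range i, sgn (((m : ℤ) - 1) * ((n : ℤ) - 1)) •
              pcomp (i + m - 1) n (pcomp j m H F) G :=
      Finset.sum_congr rfl fun j hj => pcomp_pcomp_parallel (Finset.mem_range.1 hj) H G hF
    have h2 : ∑ j ∈ Finset.range n, pcomp (i + j) m (pcomp i n H G) F
        = pcomp i (n + m - 1) H (tcomp n m G F) :=
      (Finset.sum_congr rfl fun j hj =>
        pcomp_pcomp_nested hH hi (Finset.mem_range.1 hj) m G F).trans
        (map_sum (pcompHom hH hi (n + m - 1)) _ _).symm
    rw [h1, h2]; abel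
  have swap : tcomp (p + n - 1) m (tcomp p n H G) F
      = ∑ i ∈ Finset.range p, ∑ j ∈ Finset.range (p + n - 1), pcomp j m (pcomp i n H G) F := by
    rw [Finset.sum_comm]
    exact Finset.sum_congr rfl fun j _ => pcomp_sum_left_s13 j m F _ _
  rw [swap, Finset.sum_congr rfl fun i hi => split i (Finset.mem_range.1 hi),
    Finset.sum_add_distrib, Finset.sum_add_distrib,
    sum_range_triangle p fun j i => sgn (((m : ℤ) - 1) * ((n : ℤ) - 1)) •
      pcomp (i + m - 1) n (pcomp j m H F) G]
  simp only [← Finset.smul_sum]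
  have shift (j d : ℕ) : j + 1 + d + m - 1 = j + m + d := by omega
  simp only [shift]
  rfl

lemma tcomp_preLie {p n m : ℕ} {H G F : (ℕ → L) → L} (hH : IsMultiadditive p H)
    (hG : IsMultiadditive n G) (hF : IsMultiadditive m F) :
    tcomp (p + n - 1) m (tcomp p n H G) F
      = tcomp p (n + m - 1) H (tcomp n m G F) + sgn (((m : ℤ) - 1) * ((n : ℤ) - 1)) •
        (tcomp (p + m - 1) n (tcomp p m H F) G - tcomp p (n + m - 1) H (tcomp m n F G)) := by
  rw [tcomp_tcomp hH hF, tcomp_tcomp hH hG, add_comm m n, mul_comm ((n : ℤ) - 1)]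
  simp only [smul_sub, smul_add, smul_smul, sgn_mul_self, one_smul]
  abel

/-! ### The graded Jacobi identity -/

/-- Additivity of the reduced degree, at the level of signs. When `p + n = 0` the arity `p + n - 1`
truncates and the two signs may differ, but the compositions they multiply vanish. -/
lemma sgn_smul_of_arity {M : Type*} [AddCommGroup M] {p n : ℕ} (q : ℕ) {D : M}
    (hD : p + n = 0 → D = 0) :
    sgn ((((p + n - 1 : ℕ) : ℤ) - 1) * ((q : ℤ) - 1)) • D
      = (sgn (((p : ℤ) - 1) * ((q : ℤ) - 1)) * sgn (((n : ℤ) - 1) * ((q : ℤ) - 1))) • D := by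
  rcases Nat.eq_zero_or_pos (p + n) with h0 | h0
  · rw [hD h0, smul_zero, smul_zero]
  · have : ((p + n - 1 : ℕ) : ℤ) - 1 = (p - 1) + (n - 1) := by omega
    rw [this, add_mul, sgn_add]

lemma gbr_eq_zero {p n : ℕ} (H G : (ℕ → L) → L) (h : p + n = 0) : gbr p n H G = 0 := by
  obtain ⟨rfl, rfl⟩ : p = 0 ∧ n = 0 := by omega
  simp [gbr, tcomp_zero_arity]

lemma gbr_gbr_left {p n m : ℕ} (H G : (ℕ → L) → L) {F : (ℕ → L) → L} (hF : IsMultiadditive m F) :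
    gbr (p + n - 1) m (gbr p n H G) F
      = tcomp (p + n - 1) m (tcomp p n H G) F
        - sgn (((p : ℤ) - 1) * ((n : ℤ) - 1)) • tcomp (n + p - 1) m (tcomp n p G H) F
        - (sgn (((p : ℤ) - 1) * ((m : ℤ) - 1)) * sgn (((n : ℤ) - 1) * ((m : ℤ) - 1))) •
          (tcomp m (p + n - 1) F (tcomp p n H G)
            - sgn (((p : ℤ) - 1) * ((n : ℤ) - 1)) • tcomp m (p + n - 1) F (tcomp n p G H)) := by
  rw [gbr, sgn_smul_of_arity m fun h0 => by rw [gbr_eq_zero H G h0, tcomp_zero_right hF]]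
  rw [gbr, tcomp_sub_smul_left, tcomp_sub_smul_right hF, add_comm n p]

lemma gbr_gbr_right {p n m : ℕ} {H : (ℕ → L) → L} (G F : (ℕ → L) → L) (hH : IsMultiadditive p H) :
    gbr p (n + m - 1) H (gbr n m G F)
      = tcomp p (n + m - 1) H (tcomp n m G F)
        - sgn (((n : ℤ) - 1) * ((m : ℤ) - 1)) • tcomp p (n + m - 1) H (tcomp m n F G)
        - (sgn (((n : ℤ) - 1) * ((p : ℤ) - 1)) * sgn (((m : ℤ) - 1) * ((p : ℤ) - 1))) •
          (tcomp (n + m - 1) p (tcomp n m G F) H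
            - sgn (((n : ℤ) - 1) * ((m : ℤ) - 1)) • tcomp (m + n - 1) p (tcomp m n F G) H) := by
  rw [gbr, mul_comm ((p : ℤ) - 1),
    sgn_smul_of_arity p fun h0 => by rw [gbr_eq_zero G F h0, tcomp_zero_left]]
  rw [gbr, tcomp_sub_smul_left, tcomp_sub_smul_right hH, add_comm m n]

/-- In the endomorphism operad, the right adjoint operators `∂_f(h) := [h, f]` satisfy the
graded commutation relation `[∂_f, ∂_g] = ∂_{[g,f]}`, i.e.
`[[h, g], f] - (-1)^{|f||g|} [[h, f], g] = [h, [g, f]]`. -/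
theorem endop_adjoint_commutation {p m n : ℕ} (h : MultilinearMap K (fun _ : Fin p => L) L) (f : MultilinearMap K (fun _ : Fin m => L) L) (g : MultilinearMap K (fun _ : Fin n => L) L) :
    gbr (p + n - 1) m (gbr p n (toFn h) (toFn g)) (toFn f) -
        sgn (((m : ℤ) - 1) * ((n : ℤ) - 1)) •
          gbr (p + m - 1) n (gbr p m (toFn h) (toFn f)) (toFn g) =
      gbr p (n + m - 1) (toFn h) (gbr n m (toFn g) (toFn f)) := by
  have hh := isMultiadditive_toFn h
  have hf := isMultiadditive_toFn f
  have hg := isMultiadditive_toFn g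
  rw [gbr_gbr_left _ _ hf, gbr_gbr_left _ _ hg, gbr_gbr_right _ _ hh]
  -- The pre-Lie identity with each of `h`, `g`, `f` as the outermost operation.
  have eh := tcomp_preLie hh hg hf
  have eg := tcomp_preLie hg hh hf
  have ef := tcomp_preLie hf hh hg
  rw [eh, eg, ef]
  rw [mul_comm ((n : ℤ) - 1) ((m : ℤ) - 1), mul_comm ((n : ℤ) - 1) ((p : ℤ) - 1),
    mul_comm ((m : ℤ) - 1) ((p : ℤ) - 1)]
  have sa := sgn_mul_self (((p : ℤ) - 1) * ((n : ℤ) - 1))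
  have sb := sgn_mul_self (((p : ℤ) - 1) * ((m : ℤ) - 1))
  have sc := sgn_mul_self (((m : ℤ) - 1) * ((n : ℤ) - 1))
  generalize sgn (((p : ℤ) - 1) * ((n : ℤ) - 1)) = a at *
  generalize sgn (((p : ℤ) - 1) * ((m : ℤ) - 1)) = b at *
  generalize sgn (((m : ℤ) - 1) * ((n : ℤ) - 1)) = c at *
  match_scalars <;> grind
end
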